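/- Let a = {a_j}_{j≥1} and b = {b_j}_{j≥1} be sequences of positive real numbers with a_1 ≤ a_2 ≤ ⋯ and inf_{j≥1} b_j > 0, fix ω ∈ (0,1), and for d ∈ ℕ, ε ∈ (0,1) let n(ε, I_d) = #{k ∈ ℤ^d : Σ_{j=1}^d a_j |k_j|^{2b_j} < ε^{-2} - 1} and n(ε, APP_d) = #{k ∈ ℤ^d : ω^{Σ_{j=1}^d a_j |k_j|^{2b_j}} > ε²}. Then the problem I = {I_d} is strongly polynomially tractable (i.e., there exist C, p ≥ 0 with n(ε, I_d) ≤ C ε^{-p} for all d ∈ ℕ and ε ∈ (0,1)) if and only if the problem APP = {APP_d} is EC-strongly polynomially tractable (i.e., there exist C, p ≥ 0 with n(ε, APP_d) ≤ C (1 + ln ε^{-1})^p for all d ∈ ℕ and ε ∈ (0,1)). -/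

import Mathlib

/-!
Write `S(k) = ∑ a_j |k_j|^{2b_j}` and `N_d(x) = #{k ∈ ℤ^d : S(k) < x}`. Both complexities are values of
this one counting function: `n(ε, I_d) = N_d(ε⁻² - 1)`, and, since `ω^S > ε²` means
`S < 2 ln ε⁻¹ / ln ω⁻¹`, also `n(ε, APP_d) = N_d(2 ln ε⁻¹ / ln ω⁻¹)`. As `ε` runs through `(0,1)`, each
argument `x` runs through `(0,∞)`. In terms of `x`, the two bounds are powers of `1 + x` and of
`1 + x ln ω⁻¹ / 2`, which are comparable up to a constant factor. The two tractability notions therefore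
both say that `N_d(x) ≤ C (1 + x)^q` for all `d` and `x > 0`.
-/

open Filter

/-- The threshold condition of `APP_d` as a bound on the exponent. -/
lemma sq_lt_rpow_iff {ω ε S : ℝ} (hω : ω ∈ Set.Ioo (0 : ℝ) 1) (hε : 0 < ε) :
    ε ^ 2 < ω ^ S ↔ S < 2 * Real.log ε⁻¹ / -Real.log ω := by
  have hL : 0 < -Real.log ω := neg_pos.2 (Real.log_neg hω.1 hω.2)
  rw [lt_div_iff₀ hL, ← Real.log_lt_log_iff (by positivity) (Real.rpow_pos_of_pos hω.1 S),
    Real.log_pow, Real.log_rpow hω.1, Real.log_inv]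
  push_cast
  constructor <;> intro h <;> linarith

/-- With `n(ε, I_d) = #{k ∈ ℤ^d : ∑ a_j |k_j|^{2b_j} < ε^{-2} - 1}` and
`n(ε, APP_d) = #{k ∈ ℤ^d : ω^{∑ a_j |k_j|^{2b_j}} > ε²}`:
`I` is strongly polynomially tractable iff `APP` is EC-strongly polynomially tractable. -/
theorem SPT_iff_EC_SPT
    (a b : ℕ → ℝ) (ha : ∀ j, 0 < a j) (hb : ∀ j, 0 < b j)
    (hamono : Monotone a) (hbinf : 0 < ⨅ j, b j)
    (ω : ℝ) (hω : ω ∈ Set.Ioo (0 : ℝ) 1) :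
    (∃ C p : ℝ, 0 ≤ C ∧ 0 ≤ p ∧ ∀ d : ℕ, 0 < d → ∀ ε : ℝ, ε ∈ Set.Ioo (0 : ℝ) 1 →
        (({k : Fin d → ℤ |
            ∑ j : Fin d, a j * |(k j : ℝ)| ^ (2 * b j) < ε⁻¹ ^ 2 - 1}).ncard : ℝ) ≤
          C * ε ^ (-p)) ↔
      (∃ C p : ℝ, 0 ≤ C ∧ 0 ≤ p ∧ ∀ d : ℕ, 0 < d → ∀ ε : ℝ, ε ∈ Set.Ioo (0 : ℝ) 1 →
        (({k : Fin d → ℤ |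
            ε ^ 2 < ω ^ (∑ j : Fin d, a j * |(k j : ℝ)| ^ (2 * b j))}).ncard : ℝ) ≤
          C * (1 + Real.log ε⁻¹) ^ p) := by
  have hL : 0 < -Real.log ω := neg_pos.2 (Real.log_neg hω.1 hω.2)
  set L := -Real.log ω with hLdef
  constructor
  · rintro ⟨C, p, hC, hp, H⟩
    refine ⟨C * (1 + 2 / L) ^ (p / 2), p / 2, by positivity, by positivity, fun d hd ε hε => ?_⟩
    have hlog : 0 < Real.log ε⁻¹ := Real.log_pos ((one_lt_inv₀ hε.1).2 hε.2)
    simp_rw [sq_lt_rpow_iff hω hε.1, ← hLdef]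
    set x := 2 * Real.log ε⁻¹ / L with hx
    have hx0 : 0 < x := by positivity
    -- the accuracy `δ` for `I_d` with `δ⁻² - 1 = x`
    have key := H d hd ((1 + x) ^ (-(1 / 2) : ℝ))
      ⟨by positivity, Real.rpow_lt_one_of_one_lt_of_neg (by linarith) (by norm_num)⟩
    have e1 : (((1 + x) ^ (-(1 / 2) : ℝ))⁻¹) ^ 2 - 1 = x := by
      rw [← Real.rpow_neg (by positivity), ← Real.rpow_natCast, ← Real.rpow_mul (by positivity)]
      norm_num
    have e2 : ((1 + x) ^ (-(1 / 2) : ℝ)) ^ (-p) = (1 + x) ^ (p / 2) := by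
      rw [← Real.rpow_mul (by positivity)]
      ring_nf
    rw [e1, e2] at key
    refine key.trans ?_
    rw [mul_assoc, ← Real.mul_rpow (by positivity) (by positivity)]
    have : 1 + x ≤ (1 + 2 / L) * (1 + Real.log ε⁻¹) := by
      have h1 : x = 2 / L * Real.log ε⁻¹ := by rw [hx]; ring
      have h2 : 0 < 2 / L := by positivity
      rw [h1]
      nlinarith
    gcongr
  · rintro ⟨C, p, hC, hp, H⟩
    refine ⟨C * (1 + L / 2) ^ p, 2 * p, by positivity, by positivity, fun d hd ε hε => ?_⟩
    have hε1 : 1 < ε⁻¹ := (one_lt_inv₀ hε.1).2 hε.2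
    set x := ε⁻¹ ^ 2 - 1 with hx
    have hx0 : 0 < x := by nlinarith
    -- the accuracy `δ` for `APP_d` with `2 ln δ⁻¹ / L = x`
    have hδ : Real.exp (-(x * L / 2)) < 1 := by
      rw [← Real.exp_zero]
      exact Real.exp_lt_exp.2 (neg_lt_zero.2 (by positivity))
    have key := H d hd (Real.exp (-(x * L / 2))) ⟨Real.exp_pos _, hδ⟩
    have e1 : Real.log (Real.exp (-(x * L / 2)))⁻¹ = x * L / 2 := by
      rw [Real.log_inv, Real.log_exp, neg_neg]
    simp_rw [sq_lt_rpow_iff hω (Real.exp_pos _), ← hLdef, e1] at key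
    have e2 : 2 * (x * L / 2) / L = x := by field_simp
    have e3 : ε ^ (-(2 * p)) = (1 + x) ^ p := by
      rw [hx, add_sub_cancel, ← Real.rpow_natCast, ← Real.rpow_mul (by positivity),
        Real.inv_rpow hε.1.le, ← Real.rpow_neg hε.1.le]
      norm_num
    rw [e2] at key
    rw [e3]
    refine key.trans ?_
    rw [mul_assoc, ← Real.mul_rpow (by positivity) (by positivity)]
    have : 1 + x * L / 2 ≤ (1 + L / 2) * (1 + x) := by nlinarith
    gcongr
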